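/- Let K be a field of characteristic 0, let f ∈ K[X] be monic, squarefree, of odd degree at least 3, and let a, b, c ∈ K[X] satisfy b² − ac = f with a coprime to f in K[X]. If the class of the ideal ⟨a, Y − b⟩ in Cl(A_f) is NOT a square, then for every ε ∈ Kˣ there exists a root ρ of f in a fixed algebraic closure K̄ of K such that ε·a(ρ) is not a square in the subfield K(ρ) of K̄ generated by ρ over K. -/

import Mathlib

open Polynomial FractionalIdeal IntermediateField

open scoped nonZeroDivisors

/-- The coordinate ring `A_f := K[X][Y]/⟨Y² − f⟩` of the affine hyperelliptic
curve `Y² = f(X)`. -/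
noncomputable def HypRing (K : Type*) [Field K] (f : K[X]) : Type _ :=
  Polynomial K[X] ⧸ Ideal.span {(X : Polynomial K[X]) ^ 2 - C f}

noncomputable instance (K : Type*) [Field K] (f : K[X]) : CommRing (HypRing K f) :=
  Ideal.Quotient.commRing _

/-- The quotient map `K[X][Y] → A_f`. -/
noncomputable def HypRing.mk (K : Type*) [Field K] (f : K[X]) :
    Polynomial K[X] →+* HypRing K f :=
  Ideal.Quotient.mk _

/-- The ideal `⟨a, Y − b⟩` of `A_f`. -/
noncomputable def HypIdeal (K : Type*) [Field K] (f a b : K[X]) :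
    Ideal (HypRing K f) :=
  Ideal.span {HypRing.mk K f (C a), HypRing.mk K f (X - C b)}

/-!
Suppose that `ε · a(ρ)` is a square in `K(ρ)` for every root `ρ` of `f`. By the Chinese remainder
theorem `ε a` is then a square `h²` modulo `f`, while `f ≡ b²` modulo `a`. The pairs of congruences
`u ≡ h w (mod f)`, `u ≡ b v (mod a)` cut out a lattice of triples `(u, v, w)` on which `a f` divides
`u² - f v² - ε a w²`. Since `deg f` is odd, a dimension count gives a nonzero element of such small
degree that this expression vanishes. Putting `u = a x + b v` shows that the form `[a, 2b, c]`
represents `ε w²`, properly after division by a common factor, so `⟨a, Y - b⟩` is equivalent to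
`⟨w², Y - β⟩ = ⟨w, Y - β⟩²` for some `β`.
-/

section BinaryForm

variable {R : Type*} [CommRing R]

/-- The value at `(x, y)` of the binary quadratic form `[a, 2b, c]`. -/
def formValue (a b c x y : R) : R :=
  a * x ^ 2 + 2 * b * x * y + c * y ^ 2

/-- The symmetric bilinear form of `[a, 2b, c]`, evaluated at `(x, y)` and `(r, s)`. It is
normalised so that its diagonal is `formValue a b c`. -/
def formPolar (a b c x y r s : R) : R :=
  a * x * r + b * (x * s + y * r) + c * y * s

theorem map_formValue {S : Type*} [CommRing S] (φ : R →+* S) (a b c x y : R) :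
    φ (formValue a b c x y) = formValue (φ a) (φ b) (φ c) (φ x) (φ y) := by
  simp only [formValue, map_add, map_mul, map_pow, map_ofNat]

theorem map_formPolar {S : Type*} [CommRing S] (φ : R →+* S) (a b c x y r s : R) :
    φ (formPolar a b c x y r s) =
      formPolar (φ a) (φ b) (φ c) (φ x) (φ y) (φ r) (φ s) := by
  simp only [formPolar, map_add, map_mul]

theorem formPolar_sq_sub_formValue_mul_formValue (a b c x y r s : R) :
    formPolar a b c x y r s ^ 2 - formValue a b c x y * formValue a b c r s =
      (b ^ 2 - a * c) * (x * s - y * r) ^ 2 := by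
  simp only [formPolar, formValue]
  ring

theorem exists_isCoprime_formValue_eq_mul_sq [IsDomain R] [IsPrincipalIdealRing R]
    {a b c x y e w : R} (he : IsUnit e) (hw : w ≠ 0) (h : formValue a b c x y = e * w ^ 2) :
    ∃ x' y' w' : R, IsCoprime x' y' ∧ w' ≠ 0 ∧ formValue a b c x' y' = e * w' ^ 2 := by
  classical
  let := IsBezout.toGCDDomain R
  obtain ⟨x', y', hx, hy, hunit⟩ := extract_gcd x y
  generalize gcd x y = g at hx hy
  subst hx hy
  have hscale : formValue a b c (g * x') (g * y') = g ^ 2 * formValue a b c x' y' := by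
    simp only [formValue]
    ring
  rw [hscale] at h
  obtain ⟨w', rfl⟩ : g ∣ w := by
    rw [← IsIntegrallyClosed.pow_dvd_pow_iff two_ne_zero, ← he.dvd_mul_left, ← h]
    exact dvd_mul_right _ _
  obtain ⟨hg, hw'⟩ := mul_ne_zero_iff.1 hw
  refine ⟨x', y', w', (gcd_isUnit_iff x' y').1 hunit, hw', mul_left_cancel₀ (pow_ne_zero 2 hg) ?_⟩
  linear_combination h

end BinaryForm

section SpanPair

variable {R : Type*} [CommRing R]

theorem span_pair_sq_of_isCoprime {w Z t m : R} (hZ : Z ^ 2 = t * Z + w ^ 2 * m)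
    (hwt : IsCoprime w t) : Ideal.span {w, Z} ^ 2 = Ideal.span {w ^ 2, Z} := by
  obtain ⟨p, q, hpq⟩ := hwt
  rw [sq (Ideal.span _), Ideal.span_pair_mul_span_pair]
  set I := Ideal.span {w * w, w * Z, Z * w, Z * Z} with hI
  apply le_antisymm
  · rw [hI, Ideal.span_le]
    rintro _ (rfl | rfl | rfl | rfl) <;> rw [SetLike.mem_coe, Ideal.mem_span_pair]
    · exact ⟨1, 0, by ring⟩
    · exact ⟨0, w, by ring⟩
    · exact ⟨0, w, by ring⟩
    · exact ⟨0, Z, by ring⟩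
  · have hww : w ^ 2 ∈ I := Ideal.subset_span (by simp [sq])
    have hwZ : w * Z ∈ I := Ideal.subset_span (by simp)
    have hZZ : Z ^ 2 ∈ I := Ideal.subset_span (by simp [sq])
    have htZ : t * Z ∈ I := by
      convert sub_mem hZZ (I.mul_mem_left m hww) using 1
      linear_combination -hZ
    have hZI : Z ∈ I := by
      convert add_mem (I.mul_mem_left p hwZ) (I.mul_mem_left q htZ) using 1
      linear_combination -Z * hpq
    exact Ideal.span_le.2 (Set.pair_subset hww hZI)

theorem span_pair_mul_span_pair_of_isCoprime {w Z t m : R} (hZ : Z ^ 2 = t * Z + w * m)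
    (hwt : IsCoprime w t) : Ideal.span {w, Z} * Ideal.span {w, Z - t} = Ideal.span {w} := by
  obtain ⟨p, q, hpq⟩ := hwt
  rw [Ideal.span_pair_mul_span_pair]
  apply le_antisymm
  · rw [Ideal.span_le]
    rintro _ (rfl | rfl | rfl | rfl) <;> rw [SetLike.mem_coe, Ideal.mem_span_singleton]
    · exact ⟨w, rfl⟩
    · exact ⟨Z - t, rfl⟩
    · exact ⟨Z, mul_comm Z w⟩
    · exact ⟨m, by linear_combination hZ⟩
  · set I := Ideal.span {w * w, w * (Z - t), Z * w, Z * (Z - t)}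
    have hww : w * w ∈ I := Ideal.subset_span (by simp)
    have hwt : w * t ∈ I := by
      convert sub_mem (Ideal.subset_span (by simp) : Z * w ∈ I)
        (Ideal.subset_span (by simp) : w * (Z - t) ∈ I) using 1
      ring
    rw [Ideal.span_singleton_le_iff_mem]
    convert add_mem (I.mul_mem_left p hww) (I.mul_mem_left q hwt) using 1
    linear_combination -w * hpq

theorem span_pair_mul_left_unit {e : R} (he : IsUnit e) (x y : R) :
    Ideal.span {e * x, y} = Ideal.span {x, y} := by
  rw [Ideal.span_insert, Ideal.span_singleton_mul_left_unit he, ← Ideal.span_insert]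

theorem span_singleton_mul_span_pair_formValue {a b c x y r s Y : R}
    (hY : Y ^ 2 = b ^ 2 - a * c) (hdet : x * s - y * r = 1) :
    Ideal.span {a * x + b * y + Y * y} * Ideal.span {a, Y - b} =
      Ideal.span {a} * Ideal.span {formValue a b c x y, Y - formPolar a b c x y r s} := by
  simp only [Ideal.span_mul_span', Set.singleton_mul, Set.image_pair, formValue, formPolar]
  apply le_antisymm <;> rw [Ideal.span_le] <;> rintro _ (rfl | rfl) <;>
    rw [SetLike.mem_coe, Ideal.mem_span_pair]
  · exact ⟨s, y, by linear_combination a * (a * x + b * y) * hdet⟩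
  · exact ⟨r, x, by linear_combination -a * (b * x + c * y) * hdet - y * hY⟩
  · exact ⟨x, -y, by linear_combination -y ^ 2 * hY⟩
  · exact ⟨-r, s, by linear_combination y * s * hY + a * Y * hdet⟩

end SpanPair

section HasSquareClass

variable {R : Type*} [CommRing R]

/-- The class of `I` modulo principal fractional ideals is the square of an invertible class:
`I = (g) J²` with `J` invertible and `g ≠ 0`. -/
def HasSquareClass (I : Ideal R) : Prop :=
  ∃ J : FractionalIdeal R⁰ (FractionRing R), IsUnit J ∧
    ∃ g : FractionRing R, g ≠ 0 ∧
      (I : FractionalIdeal R⁰ (FractionRing R)) = spanSingleton R⁰ g * J ^ 2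

variable [IsDomain R]

theorem isUnit_coeIdeal_of_mul_eq_span_singleton {J J' : Ideal R} {w : R} (hw : w ≠ 0)
    (h : J * J' = Ideal.span {w}) : IsUnit (J : FractionalIdeal R⁰ (FractionRing R)) := by
  refine isUnit_of_mul_isUnit_left (y := (J' : FractionalIdeal R⁰ (FractionRing R))) ?_
  rw [← coeIdeal_mul, h, coeIdeal_span_singleton]
  refine .of_mul_eq_one (spanSingleton R⁰ (algebraMap R (FractionRing R) w)⁻¹) ?_
  rw [spanSingleton_mul_spanSingleton,
    mul_inv_cancel₀ ((FaithfulSMul.algebraMap_eq_zero_iff _ _).not.2 hw), spanSingleton_one]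

theorem HasSquareClass.of_span_singleton_mul_eq {I J J' : Ideal R} {s t w : R} (hs : s ≠ 0)
    (hw : w ≠ 0) (hJ : J * J' = Ideal.span {w})
    (hI : Ideal.span {t} * I = Ideal.span {s} * J ^ 2) : HasSquareClass I := by
  have ht : t ≠ 0 := by
    rintro rfl
    have hJ0 : J = ⊥ := eq_zero_of_pow_eq_zero <| by simpa [hs] using hI.symm
    have hw0 : Ideal.span {w} = ⊥ := by rw [← hJ, hJ0, Ideal.bot_mul]
    exact hw (Ideal.span_singleton_eq_bot.1 hw0)
  have hs' : algebraMap R (FractionRing R) s ≠ 0 :=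
    (FaithfulSMul.algebraMap_eq_zero_iff _ _).not.2 hs
  have ht' : algebraMap R (FractionRing R) t ≠ 0 :=
    (FaithfulSMul.algebraMap_eq_zero_iff _ _).not.2 ht
  refine ⟨J, isUnit_coeIdeal_of_mul_eq_span_singleton hw hJ,
    (algebraMap R (FractionRing R) t)⁻¹ * algebraMap R (FractionRing R) s,
    mul_ne_zero (inv_ne_zero ht') hs', ?_⟩
  have hI' := congrArg ((↑) : Ideal R → FractionalIdeal R⁰ (FractionRing R)) hI
  simp only [coeIdeal_mul, coeIdeal_pow, coeIdeal_span_singleton] at hI'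
  rw [← spanSingleton_mul_spanSingleton, mul_assoc, ← hI', ← mul_assoc,
    spanSingleton_mul_spanSingleton, inv_mul_cancel₀ ht', spanSingleton_one, one_mul]

theorem hasSquareClass_span_pair_of_formValue_eq_mul_sq {a b c x y r s e w Y : R}
    (hY : Y ^ 2 = b ^ 2 - a * c) (hdet : x * s - y * r = 1)
    (hval : formValue a b c x y = e * w ^ 2) (he : IsUnit e) (ha : a ≠ 0) (hw : w ≠ 0)
    (hcop : IsCoprime w (2 * formPolar a b c x y r s)) :
    HasSquareClass (Ideal.span {a, Y - b}) := by
  set β := formPolar a b c x y r s with hβ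
  set m := e * formValue a b c r s with hm
  have hZ : (Y - β) ^ 2 = -(2 * β) * (Y - β) + w ^ 2 * -m := by
    have hdisc := formPolar_sq_sub_formValue_mul_formValue a b c x y r s
    rw [← hβ, hval, hdet] at hdisc
    linear_combination hY - hdisc - w ^ 2 * hm
  have hequiv := span_singleton_mul_span_pair_formValue hY hdet
  rw [hval, span_pair_mul_left_unit he, ← hβ,
    ← span_pair_sq_of_isCoprime hZ hcop.neg_right] at hequiv
  exact .of_span_singleton_mul_eq ha hw
    (span_pair_mul_span_pair_of_isCoprime (m := w * -m) (by linear_combination hZ)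
      hcop.neg_right) hequiv

end HasSquareClass

section SquareRoots

theorem exists_mul_dvd_sq_sub_of_isCoprime {R : Type*} [CommRing R] {p g q h A : R}
    (hpg : IsCoprime p g) (hq : p ∣ q ^ 2 - A) (hh : g ∣ h ^ 2 - A) :
    ∃ k, p * g ∣ k ^ 2 - A := by
  have ⟨u, v, huv⟩ := hpg
  have hkq : p ∣ u * p * h + v * g * q - q := ⟨u * (h - q), by linear_combination q * huv⟩
  have hkh : g ∣ u * p * h + v * g * q - h := ⟨v * (q - h), by linear_combination h * huv⟩
  refine ⟨u * p * h + v * g * q, hpg.mul_dvd ?_ ?_⟩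
  · simpa using dvd_add (hkq.trans (sub_dvd_pow_sub_pow _ _ 2)) hq
  · simpa using dvd_add (hkh.trans (sub_dvd_pow_sub_pow _ _ 2)) hh

variable {K L : Type*} [Field K] [Field L] [Algebra K L]

theorem exists_minpoly_dvd_sq_sub {ρ z : L} {A : K[X]} (hρ : IsIntegral K ρ) (hz : z ∈ K⟮ρ⟯)
    (hzA : z ^ 2 = aeval ρ A) : ∃ q : K[X], minpoly K ρ ∣ q ^ 2 - A := by
  rw [← IntermediateField.mem_toSubalgebra,
    IntermediateField.adjoin_simple_toSubalgebra_of_isAlgebraic hρ.isAlgebraic,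
    Algebra.adjoin_singleton_eq_range_aeval] at hz
  obtain ⟨q, hq⟩ := hz
  refine ⟨q, minpoly.dvd K ρ ?_⟩
  rw [map_sub, map_pow, sub_eq_zero, ← hzA, ← hq]
  rfl

theorem exists_dvd_sq_sub_of_isSquare_at_roots {f A : K[X]} (hf : Squarefree f)
    (hsplits : (f.map (algebraMap K L)).Splits)
    (hA : ∀ ρ : L, aeval ρ f = 0 → ∃ z ∈ K⟮ρ⟯, z ^ 2 = aeval ρ A) :
    ∃ h : K[X], f ∣ h ^ 2 - A := by
  induction f using UniqueFactorizationMonoid.induction_on_prime with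
  | h₁ => exact absurd hf not_squarefree_zero
  | h₂ u hu => exact ⟨0, hu.dvd⟩
  | h₃ g p hg hp ih =>
    have hpg0 : (p * g).map (algebraMap K L) ≠ 0 :=
      (Polynomial.map_ne_zero_iff (algebraMap K L).injective).2 (mul_ne_zero hp.ne_zero hg)
    obtain ⟨h, hh⟩ := ih hf.of_mul_right
      (hsplits.of_dvd hpg0 (Polynomial.map_dvd _ (dvd_mul_left g p)))
      fun ρ hρ ↦ hA ρ (by simp [hρ])
    obtain ⟨ρ, hρ⟩ : ∃ ρ : L, aeval ρ p = 0 := by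
      have hdeg : (p.map (algebraMap K L)).degree ≠ 0 := by
        rw [degree_map]
        exact fun h0 ↦ hp.not_isUnit (isUnit_iff_degree_eq_zero.2 h0)
      simpa using (hsplits.of_dvd hpg0
        (Polynomial.map_dvd _ (dvd_mul_right p g))).exists_eval_eq_zero hdeg
    have hint : IsIntegral K ρ := IsAlgebraic.isIntegral ⟨p, hp.ne_zero, hρ⟩
    have hmin : Associated (minpoly K ρ) p :=
      (minpoly.irreducible hint).associated_of_dvd hp.irreducible (minpoly.dvd K ρ hρ)
    obtain ⟨z, hz, hzA⟩ := hA ρ (by simp [hρ])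
    obtain ⟨q, hq⟩ := exists_minpoly_dvd_sq_sub hint hz hzA
    have hcop : IsCoprime p g :=
      hp.irreducible.coprime_iff_not_dvd.2 fun hd ↦ hp.not_isUnit (hf p (mul_dvd_mul_left p hd))
    exact exists_mul_dvd_sq_sub_of_isCoprime hcop (hmin.symm.dvd.trans hq) hh

end SquareRoots

section NotIsSquare

theorem not_isSquare_of_odd_natDegree {R : Type*} [Semiring R] [NoZeroDivisors R] {f : R[X]}
    (hf : Odd f.natDegree) : ¬ IsSquare f := by
  rintro ⟨r, rfl⟩
  rw [← sq, natDegree_pow] at hf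
  exact Nat.not_odd_iff_even.2 (even_two_mul _) hf

variable {R : Type*} [CommRing R] [IsDomain R]

theorem eq_zero_of_sq_eq_mul_sq [IsIntegrallyClosed R] {f u v : R} (hf : ¬ IsSquare f)
    (h : u ^ 2 = f * v ^ 2) : v = 0 := by
  by_contra hv
  obtain ⟨r, rfl⟩ : v ∣ u :=
    (IsIntegrallyClosed.pow_dvd_pow_iff two_ne_zero).1 (h ▸ dvd_mul_left _ _)
  exact hf ⟨r, mul_right_cancel₀ (pow_ne_zero 2 hv) (by linear_combination -h)⟩

theorem irreducible_X_sq_sub_C {f : R} (hf : ¬ IsSquare f) : Irreducible (X ^ 2 - C f) := by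
  by_contra hred
  rw [(monic_X_pow_sub_C f two_ne_zero).not_irreducible_iff_exists_add_mul_eq_coeff
    natDegree_X_pow_sub_C] at hred
  obtain ⟨c₁, c₂, hconst, hlin⟩ := hred
  simp only [coeff_sub, coeff_X_pow, coeff_C_zero, coeff_C_succ, OfNat.zero_ne_ofNat,
    OfNat.one_ne_ofNat, if_false, zero_sub, sub_zero] at hconst hlin
  exact hf ⟨c₁, by linear_combination -hconst + c₁ * hlin⟩

end NotIsSquare

section SmallSolutions

theorem finrank_degreeLT {R : Type*} [CommRing R] [Nontrivial R] (n : ℕ) :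
    Module.finrank R (degreeLT R n) = n := by
  rw [(degreeLTEquiv R n).finrank_eq, Module.finrank_fin_fun]

theorem degree_mul_sq_lt_of_mem_degreeLT {R : Type*} [Semiring R] {p q : R[X]} {A N : ℕ}
    (hp : p ∈ degreeLT R A) (hN : q.natDegree + 2 * A ≤ N + 1) : (q * p ^ 2).degree < N := by
  by_cases hqp : q * p ^ 2 = 0
  · simp [hqp]
  have hp0 : p ≠ 0 := by
    rintro rfl
    simp at hqp
  rw [mem_degreeLT, ← natDegree_lt_iff_degree_lt hp0] at hp
  rw [← natDegree_lt_iff_degree_lt hqp]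
  have hmul : (q * p ^ 2).natDegree ≤ q.natDegree + (p ^ 2).natDegree := natDegree_mul_le
  have hpow : (p ^ 2).natDegree ≤ 2 * p.natDegree := natDegree_pow_le
  omega

variable {K : Type*} [Field K]

theorem exists_ne_zero_dvd_dvd {M : Type*} [AddCommGroup M] [Module K M] [FiniteDimensional K M]
    {f g : K[X]} (hf : f ≠ 0) (hg : g ≠ 0) (S T : M →ₗ[K] K[X])
    (hdim : f.natDegree + g.natDegree < Module.finrank K M) :
    ∃ m : M, m ≠ 0 ∧ f ∣ S m ∧ g ∣ T m := by
  have := (AdjoinRoot.powerBasis hf).finite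
  have := (AdjoinRoot.powerBasis hg).finite
  let Φ : M →ₗ[K] AdjoinRoot f × AdjoinRoot g :=
    ((AdjoinRoot.mkₐ f).toLinearMap ∘ₗ S).prod ((AdjoinRoot.mkₐ g).toLinearMap ∘ₗ T)
  have hker : LinearMap.ker Φ ≠ ⊥ := LinearMap.ker_ne_bot_of_finrank_lt <| by
    rwa [Module.finrank_prod, (AdjoinRoot.powerBasis hf).finrank,
      (AdjoinRoot.powerBasis hg).finrank, AdjoinRoot.powerBasis_dim, AdjoinRoot.powerBasis_dim]
  obtain ⟨m, hm, hm0⟩ := (Submodule.ne_bot_iff _).1 hker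
  obtain ⟨hS, hT⟩ := Prod.mk_inj.1 (LinearMap.mem_ker.1 hm)
  exact ⟨m, hm0, AdjoinRoot.mk_eq_zero.1 hS, AdjoinRoot.mk_eq_zero.1 hT⟩

theorem exists_mem_degreeLT_dvd_sub_dvd_sub {f a : K[X]} (hf : f ≠ 0) (ha : a ≠ 0) (h b : K[X])
    {A B D : ℕ} (hABD : f.natDegree + a.natDegree < A + B + D) :
    ∃ u ∈ degreeLT K A, ∃ v ∈ degreeLT K B, ∃ w ∈ degreeLT K D,
      ¬ (u = 0 ∧ v = 0 ∧ w = 0) ∧ f ∣ u - h * w ∧ a ∣ u - b * v := by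
  let U := (degreeLT K A).subtype ∘ₗ LinearMap.fst K _ (degreeLT K B × degreeLT K D)
  let V := (degreeLT K B).subtype ∘ₗ LinearMap.fst K _ (degreeLT K D) ∘ₗ
    LinearMap.snd K (degreeLT K A) _
  let W := (degreeLT K D).subtype ∘ₗ LinearMap.snd K (degreeLT K B) _ ∘ₗ
    LinearMap.snd K (degreeLT K A) _
  obtain ⟨⟨u, v, w⟩, hne, hf', ha'⟩ := exists_ne_zero_dvd_dvd hf ha
    (U - LinearMap.mulLeft K h ∘ₗ W) (U - LinearMap.mulLeft K b ∘ₗ V) <| by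
      simpa only [Module.finrank_prod, finrank_degreeLT, add_assoc] using hABD
  exact ⟨u, u.2, v, v.2, w, w.2, by simpa using hne, hf', ha'⟩

theorem exists_sq_sub_mul_sq_eq_mul_sq {f a b h : K[X]} (e : K) (hodd : Odd f.natDegree)
    (ha : a ≠ 0) (hcop : IsCoprime a f) (hb : a ∣ b ^ 2 - f) (hh : f ∣ h ^ 2 - C e * a) :
    ∃ u v w : K[X], w ≠ 0 ∧ a ∣ u - b * v ∧ u ^ 2 - f * v ^ 2 = C e * a * w ^ 2 := by
  have hf : f ≠ 0 := by
    rintro rfl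
    simp at hodd
  have ⟨k, hk⟩ := hodd
  obtain ⟨u, hu, v, hv, w, hw, hne, hfu, hau⟩ := exists_mem_degreeLT_dvd_sub_dvd_sub hf ha h b
    (A := (f.natDegree + a.natDegree + 1) / 2) (B := (a.natDegree + 1) / 2)
    (D := (f.natDegree + 1) / 2) (by omega)
  have hdvd : a * f ∣ u ^ 2 - f * v ^ 2 - C e * a * w ^ 2 := by
    apply hcop.mul_dvd
    · obtain ⟨l, hl⟩ := hau
      obtain ⟨l', hl'⟩ := hb
      exact ⟨l * (u + b * v) + l' * v ^ 2 - C e * w ^ 2,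
        by linear_combination (u + b * v) * hl + v ^ 2 * hl'⟩
    · obtain ⟨l, hl⟩ := hfu
      obtain ⟨l', hl'⟩ := hh
      exact ⟨l * (u + h * w) - v ^ 2 + l' * w ^ 2,
        by linear_combination (u + h * w) * hl + w ^ 2 * hl'⟩
  have hdeg : (u ^ 2 - f * v ^ 2 - C e * a * w ^ 2).degree < (a * f).degree := by
    rw [degree_eq_natDegree (mul_ne_zero ha hf), natDegree_mul ha hf]
    refine (degree_sub_le _ _).trans_lt (max_lt ((degree_sub_le _ _).trans_lt (max_lt ?_ ?_)) ?_)
    · rw [← one_mul (u ^ 2)]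
      exact degree_mul_sq_lt_of_mem_degreeLT hu (by rw [natDegree_one]; omega)
    · exact degree_mul_sq_lt_of_mem_degreeLT hv (by omega)
    · have := natDegree_C_mul_le e a
      exact degree_mul_sq_lt_of_mem_degreeLT hw (by omega)
  have heq := eq_zero_of_dvd_of_degree_lt hdvd hdeg
  refine ⟨u, v, w, ?_, hau, sub_eq_zero.1 heq⟩
  rintro rfl
  obtain rfl : v = 0 :=
    eq_zero_of_sq_eq_mul_sq (u := u) (not_isSquare_of_odd_natDegree hodd)
      (by linear_combination heq)
  exact hne ⟨by simpa using heq, rfl, rfl⟩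

theorem exists_formValue_eq_C_mul_sq {f a b c h : K[X]} (e : K) (hodd : Odd f.natDegree)
    (ha : a ≠ 0) (hcop : IsCoprime a f) (hrel : b ^ 2 - a * c = f) (hh : f ∣ h ^ 2 - C e * a) :
    ∃ x y w : K[X], w ≠ 0 ∧ formValue a b c x y = C e * w ^ 2 := by
  obtain ⟨u, v, w, hw, ⟨x, hx⟩, huvw⟩ := exists_sq_sub_mul_sq_eq_mul_sq e hodd ha hcop
    (b := b) ⟨c, by linear_combination hrel⟩ hh
  refine ⟨x, v, w, hw, mul_left_cancel₀ ha ?_⟩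
  obtain rfl : u = a * x + b * v := by linear_combination hx
  rw [formValue]
  linear_combination huvw - v ^ 2 * hrel

end SmallSolutions

theorem isRelPrime_of_squarefree_sq_sub_sq_mul {R : Type*} [CommRing R] {β w m : R}
    (h : Squarefree (β ^ 2 - w ^ 2 * m)) : IsRelPrime w β := by
  rintro d ⟨k, rfl⟩ ⟨l, rfl⟩
  exact h d ⟨l ^ 2 - k ^ 2 * m, by ring⟩

namespace HypRing

variable {K : Type*} [Field K] {f : K[X]}

variable (f) in
/-- The inclusion `K[X] → A_f`. -/
noncomputable def of : K[X] →+* HypRing K f :=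
  (mk K f).comp C

theorem mk_X_sq : mk K f X ^ 2 = of f f := by
  rw [of, RingHom.comp_apply, ← map_pow, ← sub_eq_zero, ← map_sub]
  exact Ideal.Quotient.eq_zero_iff_mem.2 (Ideal.mem_span_singleton_self _)

theorem of_injective : Function.Injective (of f) := by
  rw [injective_iff_map_eq_zero]
  intro p hp
  have hdvd : X ^ 2 - C f ∣ C p :=
    Ideal.mem_span_singleton.1 (Ideal.Quotient.eq_zero_iff_mem.1 hp)
  by_contra hp0
  have hle := natDegree_le_of_dvd hdvd (C_ne_zero.2 hp0)
  rw [natDegree_X_pow_sub_C, natDegree_C] at hle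
  omega

theorem isDomain (hf : ¬ IsSquare f) : IsDomain (HypRing K f) :=
  have : (Ideal.span {(X : K[X][X]) ^ 2 - C f}).IsPrime :=
    (Ideal.span_singleton_prime (irreducible_X_sq_sub_C hf).ne_zero).2
      (irreducible_X_sq_sub_C hf).prime
  Ideal.Quotient.isDomain _

end HypRing

theorem hypIdeal_eq_span {K : Type*} [Field K] (f a b : K[X]) :
    HypIdeal K f a b =
      Ideal.span {HypRing.of f a, HypRing.mk K f X - HypRing.of f b} := by
  rw [HypIdeal, map_sub]
  rfl

theorem hasSquareClass_hypIdeal_of_formValue_eq {K : Type*} [Field K] [NeZero (2 : K)]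
    {f a b c x y w e : K[X]} (hsqfree : Squarefree f) (hf : ¬ IsSquare f)
    (hrel : b ^ 2 - a * c = f) (ha : a ≠ 0) (he : IsUnit e) (hw : w ≠ 0) (hxy : IsCoprime x y)
    (hval : formValue a b c x y = e * w ^ 2) : HasSquareClass (HypIdeal K f a b) := by
  have := HypRing.isDomain hf
  obtain ⟨s, t, hst⟩ := hxy
  have hdet : x * s - y * -t = 1 := by linear_combination hst
  have hdisc : f = formPolar a b c x y (-t) s ^ 2 - w ^ 2 * (e * formValue a b c (-t) s) := by
    have := formPolar_sq_sub_formValue_mul_formValue a b c x y (-t) s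
    rw [hval, hdet, hrel] at this
    linear_combination -this
  have hcop : IsCoprime w (2 * formPolar a b c x y (-t) s) := by
    have htwo : IsUnit (2 : K[X]) := isUnit_C.2 (two_ne_zero (α := K)).isUnit
    rw [isCoprime_mul_unit_left_right htwo]
    exact (isRelPrime_of_squarefree_sq_sub_sq_mul (hdisc ▸ hsqfree)).isCoprime
  let ι := HypRing.of f
  have hι {p : K[X]} : p ≠ 0 → ι p ≠ 0 := (map_ne_zero_iff ι HypRing.of_injective).2
  have hY : HypRing.mk K f X ^ 2 = ι b ^ 2 - ι a * ι c := by
    rw [HypRing.mk_X_sq, ← map_pow, ← map_mul, ← map_sub, hrel]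
  have hdetι : ι x * ι s - ι y * ι (-t) = 1 := by
    rw [← map_mul, ← map_mul, ← map_sub, hdet, map_one]
  have hvalι : formValue (ι a) (ι b) (ι c) (ι x) (ι y) = ι e * ι w ^ 2 := by
    rw [← map_formValue, hval, map_mul, map_pow]
  have hcopι : IsCoprime (ι w) (2 * formPolar (ι a) (ι b) (ι c) (ι x) (ι y) (ι (-t)) (ι s)) := by
    rw [← map_formPolar, ← map_ofNat ι, ← map_mul]
    exact hcop.map ι
  rw [hypIdeal_eq_span]
  exact hasSquareClass_span_pair_of_formValue_eq_mul_sq hY hdetι hvalι (he.map ι) (hι ha)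
    (hι hw) hcopι

theorem nonsquare_class_has_nonsquare_value_at_root_general
    {K L : Type*} [Field K] [NeZero (2 : K)] [Field L] [Algebra K L] {f a b c : K[X]}
    (hsqfree : Squarefree f) (hodd : Odd f.natDegree)
    (hsplits : (f.map (algebraMap K L)).Splits)
    (hrel : b ^ 2 - a * c = f) (hcop : IsCoprime a f)
    (hnotsq : ¬ HasSquareClass (HypIdeal K f a b)) (ε : Kˣ) :
    ∃ ρ : L, aeval ρ f = 0 ∧
      ¬ ∃ z : L, z ∈ K⟮ρ⟯ ∧ z ^ 2 = algebraMap K L (ε : K) * aeval ρ a := by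
  by_contra! hsq
  have hf : ¬ IsSquare f := not_isSquare_of_odd_natDegree hodd
  have ha : a ≠ 0 := by
    rintro rfl
    rw [natDegree_eq_zero_of_isUnit (isCoprime_zero_left.1 hcop)] at hodd
    exact Nat.not_odd_zero hodd
  have hε : IsUnit (C (ε : K)) := ε.isUnit.map C
  obtain ⟨h, hh⟩ : ∃ h, f ∣ h ^ 2 - C (ε : K) * a :=
    exists_dvd_sq_sub_of_isSquare_at_roots hsqfree hsplits (by simpa using hsq)
  obtain ⟨x, y, w, hw, hval⟩ := exists_formValue_eq_C_mul_sq (ε : K) hodd ha hcop hrel hh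
  obtain ⟨x, y, w, hxy, hw, hval⟩ := exists_isCoprime_formValue_eq_mul_sq hε hw hval
  exact hnotsq (hasSquareClass_hypIdeal_of_formValue_eq hsqfree hf hrel ha hε hw hxy hval)

/-- **Non-square classes have a non-square value at some root of `f`.**
Let `K` be a field of characteristic `0`, `f ∈ K[X]` monic squarefree of odd
degree `≥ 3`, and `b² − ac = f` with `a` coprime to `f`. If the class of
`⟨a, Y − b⟩` in `Cl(A_f)` is not a square (i.e. `⟨a, Y − b⟩` cannot be written
as `(g)·J²` with `J` invertible and `g ≠ 0`), then for every `ε ∈ Kˣ` there is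
a root `ρ` of `f` in a fixed algebraic closure `K̄` such that `ε·a(ρ)` is not
a square in the subfield `K(ρ)` of `K̄`. -/
theorem nonsquare_class_has_nonsquare_value_at_root
    (K : Type*) [Field K] [CharZero K]
    (f : K[X]) (hmonic : f.Monic) (hsqfree : Squarefree f)
    (hodd : Odd f.natDegree) (hdeg : 3 ≤ f.natDegree)
    (a b c : K[X]) (hrel : b ^ 2 - a * c = f) (hcop : IsCoprime a f)
    (hnotsq : ¬ ∃ J : FractionalIdeal (HypRing K f)⁰ (FractionRing (HypRing K f)),
        IsUnit J ∧
        ∃ g : FractionRing (HypRing K f), g ≠ 0 ∧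
          (HypIdeal K f a b :
              FractionalIdeal (HypRing K f)⁰ (FractionRing (HypRing K f))) =
            spanSingleton (HypRing K f)⁰ g * J ^ 2) :
    ∀ ε : Kˣ, ∃ ρ : AlgebraicClosure K,
      aeval ρ f = 0 ∧
      ¬ ∃ z : AlgebraicClosure K, z ∈ K⟮ρ⟯ ∧
          z ^ 2 = algebraMap K (AlgebraicClosure K) (ε : K) * aeval ρ a := by
  exact nonsquare_class_has_nonsquare_value_at_root_general hsqfree hodd (IsAlgClosed.splits _)
    hrel hcop hnotsq
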